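/- Let a(x), b(x) ∈ F_q[x] and let C be the one-generator quasi-cyclic code of length 2n and index 2 generated by the images of (a(x), b(x)) in R. Then dim_{F_q}(C) = n - deg(f(x)), where f(x) = gcd(a(x), b(x), x^n - 1) in F_q[x]. -/

import Mathlib

open Polynomial Matrix

noncomputable section
open scoped Classical

variable {F : Type*} [Field F] {n : ℕ}

/-- The symplectic inner product on `F^{2n}`. -/
def sympForm (u v : (Fin n ⊕ Fin n) → F) : F :=
  (∑ i : Fin n, u (Sum.inl i) * v (Sum.inr i)) -
    ∑ i : Fin n, v (Sum.inl i) * u (Sum.inr i)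

lemma sympForm_add_left (u w v : (Fin n ⊕ Fin n) → F) :
    sympForm (u + w) v = sympForm u v + sympForm w v := by
  simp [sympForm, add_mul, mul_add, Finset.sum_add_distrib]
  ring

lemma sympForm_smul_left (c : F) (u v : (Fin n ⊕ Fin n) → F) :
    sympForm (c • u) v = c * sympForm u v := by
  simp [sympForm, Finset.mul_sum, mul_sub, mul_assoc, mul_left_comm]

/-- The symplectic dual of a subspace of `F^{2n}`. -/
def sympDual (C : Submodule F ((Fin n ⊕ Fin n) → F)) :
    Submodule F ((Fin n ⊕ Fin n) → F) where
  carrier := {u | ∀ v ∈ C, sympForm u v = 0}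
  add_mem' := by
    intro a b ha hb v hv
    rw [sympForm_add_left, ha v hv, hb v hv, add_zero]
  zero_mem' := by
    intro v hv
    have : (0 : (Fin n ⊕ Fin n) → F) = (0 : F) • 0 := by simp
    rw [this, sympForm_smul_left, zero_mul]
  smul_mem' := by
    intro c a ha v hv
    rw [sympForm_smul_left, ha v hv, mul_zero]

/-- The `2n × 2n` symplectic matrix `Ω`. -/
def Omat (F : Type*) [Field F] (n : ℕ) : Matrix (Fin n ⊕ Fin n) (Fin n ⊕ Fin n) F :=
  Matrix.fromBlocks 0 1 (-1) 0

/-- The row space of a matrix. -/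
def rowSpace {ι κ : Type*} (M : Matrix ι κ F) : Submodule F (κ → F) :=
  Submodule.span F (Set.range fun i => M i)

lemma monic_xn_sub_one (F : Type*) [Field F] {n : ℕ} (hn : n ≠ 0) :
    (X ^ n - 1 : F[X]).Monic := by
  simpa using Polynomial.monic_X_pow_sub_C (1 : F) hn

/-- The coefficient vector of the canonical degree `< n` representative of an
element of `R = F[x]/(x^n - 1)`, as an `F`-linear map. -/
def toVecL (hn : n ≠ 0) : AdjoinRoot (X ^ n - 1 : F[X]) →ₗ[F] (Fin n → F) :=
  (LinearMap.pi fun i : Fin n => Polynomial.lcoeff F (i : ℕ)) ∘ₗ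
    AdjoinRoot.modByMonicHom (monic_xn_sub_one F hn)

/-- The linear map `r ↦ (r·a, r·b)` from `R` to `F^{2n}`. -/
def QCgen (hn : n ≠ 0) (a b : AdjoinRoot (X ^ n - 1 : F[X])) :
    AdjoinRoot (X ^ n - 1 : F[X]) →ₗ[F] ((Fin n ⊕ Fin n) → F) :=
  LinearMap.pi (Sum.elim
    (fun i => LinearMap.proj i ∘ₗ toVecL hn ∘ₗ LinearMap.mulRight F a)
    (fun i => LinearMap.proj i ∘ₗ toVecL hn ∘ₗ LinearMap.mulRight F b))

/-- The one-generator quasi-cyclic code of length `2n` and index `2`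
generated by `(a(x), b(x))`, as a subspace of `F^{2n}`. -/
def QCcode (hn : n ≠ 0) (a b : AdjoinRoot (X ^ n - 1 : F[X])) :
    Submodule F ((Fin n ⊕ Fin n) → F) :=
  LinearMap.range (QCgen hn a b)

/-- The element of `R` with coefficient vector `v`. -/
def fromVec (v : Fin n → F) : AdjoinRoot (X ^ n - 1 : F[X]) :=
  AdjoinRoot.mk _ (∑ i : Fin n, Polynomial.C (v i) * X ^ (i : ℕ))

/-- The transpose polynomial `ā(x) = x^n a(x⁻¹) mod (x^n - 1)`. -/
def transposePoly (hn : n ≠ 0) (a : AdjoinRoot (X ^ n - 1 : F[X])) :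
    AdjoinRoot (X ^ n - 1 : F[X]) :=
  fromVec (fun i => toVecL hn a (-i))

/-- The cyclic code of length `n` generated by (the image of) `g(x)`. -/
def cyclicCode (hn : n ≠ 0) (g : F[X]) : Submodule F (Fin n → F) :=
  LinearMap.range (toVecL hn ∘ₗ
    LinearMap.mulRight F (AdjoinRoot.mk (X ^ n - 1 : F[X]) g))

/-- The Hamming weight of a vector. -/
def hWeight {ι : Type*} (u : ι → F) : ℕ := {i | u i ≠ 0}.ncard

/-!
With `R = F[x]/(xⁿ - 1)`, the code is isomorphic to `R / Ann(a, b)`. By Bézout,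
`Ann(a, b) = Ann(f)`, and since `f ∣ xⁿ - 1`, rank-nullity for multiplication by `f` on `R` gives
`dim Ann(f) = dim R/(f) = dim F[x]/(f) = deg f`.
-/

theorem dvd_mul_euclideanDomain_gcd_iff {R : Type*} [EuclideanDomain R] [DecidableEq R]
    {k r a b : R} :
    k ∣ r * EuclideanDomain.gcd a b ↔ k ∣ r * a ∧ k ∣ r * b := by
  constructor
  · intro h
    exact ⟨h.trans (mul_dvd_mul_left r (EuclideanDomain.gcd_dvd_left a b)),
      h.trans (mul_dvd_mul_left r (EuclideanDomain.gcd_dvd_right a b))⟩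
  · rintro ⟨ha, hb⟩
    rw [EuclideanDomain.gcd_eq_gcd_ab, mul_add, ← mul_assoc, ← mul_assoc]
    exact dvd_add (ha.mul_right _) (hb.mul_right _)

theorem finrank_ker_mulRight_eq_finrank_quotient {A : Type*} [CommRing A] [Algebra F A]
    [FiniteDimensional F A] (x : A) :
    Module.finrank F (LinearMap.ker (LinearMap.mulRight F x)) =
      Module.finrank F (A ⧸ Ideal.span {x}) := by
  have hrange : LinearMap.range (LinearMap.mulRight F x) =
      (Ideal.span {x}).restrictScalars F := by
    ext y
    simp only [LinearMap.mem_range, LinearMap.mulRight_apply, Submodule.restrictScalars_mem,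
      Ideal.mem_span_singleton']
  have hquot : Module.finrank F (A ⧸ (Ideal.span {x}).restrictScalars F) =
      Module.finrank F (A ⧸ Ideal.span {x}) :=
    (Submodule.Quotient.restrictScalarsEquiv F (Ideal.span {x})).finrank_eq
  have hrank_nullity := (LinearMap.mulRight F x).finrank_range_add_finrank_ker
  have hcoker := (LinearMap.range (LinearMap.mulRight F x)).finrank_quotient_add_finrank
  rw [hrange] at hrank_nullity hcoker
  omega

section AdjoinRoot

variable {N : F[X]}

theorem mul_mk_gcd_gcd_self_eq_zero_iff (r : AdjoinRoot N) (a b : F[X]) :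
    r * AdjoinRoot.mk N (EuclideanDomain.gcd a (EuclideanDomain.gcd b N)) = 0 ↔
      r * AdjoinRoot.mk N a = 0 ∧ r * AdjoinRoot.mk N b = 0 := by
  obtain ⟨p, rfl⟩ := AdjoinRoot.mk_surjective r
  simp only [← map_mul, AdjoinRoot.mk_eq_zero, dvd_mul_euclideanDomain_gcd_iff,
    dvd_mul_left, and_true]

theorem finrank_quotient_span_mk_of_dvd {f : F[X]} (hf : f ∣ N) :
    Module.finrank F (AdjoinRoot N ⧸ Ideal.span {AdjoinRoot.mk N f}) = f.natDegree := by
  have hmap : (Ideal.span {f}).map (Ideal.Quotient.mkₐ F (Ideal.span {N})) =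
      Ideal.span {AdjoinRoot.mk N f} := by
    rw [Ideal.map_span, Set.image_singleton]
    rfl
  have hle : Ideal.span {N} ≤ Ideal.span {f} := Ideal.span_singleton_le_span_singleton.mpr hf
  rw [← hmap, ← finrank_quotient_span_eq_natDegree (f := f)]
  exact (DoubleQuot.quotQuotEquivQuotOfLEₐ F hle).toLinearEquiv.finrank_eq

theorem finrank_ker_mulRight_mk_of_dvd (hN : N ≠ 0) {f : F[X]} (hf : f ∣ N) :
    Module.finrank F (LinearMap.ker (LinearMap.mulRight F (AdjoinRoot.mk N f))) =
      f.natDegree := by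
  have : FiniteDimensional F (AdjoinRoot N) := (AdjoinRoot.powerBasis hN).finite
  rw [finrank_ker_mulRight_eq_finrank_quotient, finrank_quotient_span_mk_of_dvd hf]

end AdjoinRoot

theorem natDegree_X_pow_sub_one {R : Type*} [Ring R] [Nontrivial R] {n : ℕ} :
    (X ^ n - 1 : R[X]).natDegree = n :=
  natDegree_X_pow_sub_C (r := (1 : R))

theorem toVecL_injective (hn : n ≠ 0) : Function.Injective (toVecL (F := F) hn) := by
  intro r s hrs
  refine (AdjoinRoot.powerBasisAux' (monic_xn_sub_one F hn)).ext_elem fun i => ?_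
  rw [AdjoinRoot.powerBasisAux'_repr_apply_to_fun, AdjoinRoot.powerBasisAux'_repr_apply_to_fun]
  exact congrFun hrs (i.cast natDegree_X_pow_sub_one)

theorem QCgen_eq_zero_iff (hn : n ≠ 0) (a b r : AdjoinRoot (X ^ n - 1 : F[X])) :
    QCgen hn a b r = 0 ↔ r * a = 0 ∧ r * b = 0 := by
  have hcoord : QCgen hn a b r = Sum.elim (toVecL hn (r * a)) (toVecL hn (r * b)) := by
    ext (i | i) <;> rfl
  rw [hcoord, ← Sum.elim_zero_zero, Sum.elim_eq_iff,
    map_eq_zero_iff _ (toVecL_injective hn), map_eq_zero_iff _ (toVecL_injective hn)]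

theorem ker_QCgen_mk (hn : n ≠ 0) (a b : F[X]) :
    LinearMap.ker (QCgen hn (AdjoinRoot.mk (X ^ n - 1 : F[X]) a) (AdjoinRoot.mk _ b)) =
      LinearMap.ker (LinearMap.mulRight F (AdjoinRoot.mk (X ^ n - 1 : F[X])
        (EuclideanDomain.gcd a (EuclideanDomain.gcd b (X ^ n - 1))))) := by
  ext r
  rw [LinearMap.mem_ker, LinearMap.mem_ker, QCgen_eq_zero_iff, LinearMap.mulRight_apply,
    mul_mk_gcd_gcd_self_eq_zero_iff]

theorem oneGenQC_dim_eq_general {F : Type*} [Field F] {n : ℕ} (hn : n ≠ 0) (a b : F[X]) :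
    Module.finrank F
        (QCcode hn (AdjoinRoot.mk (X ^ n - 1 : F[X]) a)
          (AdjoinRoot.mk (X ^ n - 1 : F[X]) b)) =
      n - (EuclideanDomain.gcd a (EuclideanDomain.gcd b (X ^ n - 1))).natDegree := by
  have hN : (X ^ n - 1 : F[X]) ≠ 0 := (monic_xn_sub_one F hn).ne_zero
  have hdvd : EuclideanDomain.gcd a (EuclideanDomain.gcd b (X ^ n - 1)) ∣ (X ^ n - 1 : F[X]) :=
    (EuclideanDomain.gcd_dvd_right _ _).trans (EuclideanDomain.gcd_dvd_right _ _)
  have hdim : Module.finrank F (AdjoinRoot (X ^ n - 1 : F[X])) = n :=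
    finrank_quotient_span_eq_natDegree.trans natDegree_X_pow_sub_one
  have : FiniteDimensional F (AdjoinRoot (X ^ n - 1 : F[X])) := (AdjoinRoot.powerBasis hN).finite
  have hrank_nullity := (QCgen hn (AdjoinRoot.mk (X ^ n - 1 : F[X]) a)
    (AdjoinRoot.mk (X ^ n - 1 : F[X]) b)).finrank_range_add_finrank_ker
  rw [ker_QCgen_mk, finrank_ker_mulRight_mk_of_dvd hN hdvd, hdim] at hrank_nullity
  exact Nat.eq_sub_of_add_eq hrank_nullity

/-- The one-generator QC code generated by the images of
`(a(x), b(x))` in `R` has dimension `n - deg f`, where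
`f = gcd(a(x), b(x), xⁿ - 1)`. -/
theorem oneGenQC_dim_eq
    {F : Type*} [Field F] [Fintype F] {n : ℕ} (hn : n ≠ 0)
    (a b : F[X]) :
    Module.finrank F
        (QCcode hn (AdjoinRoot.mk (X ^ n - 1 : F[X]) a)
          (AdjoinRoot.mk (X ^ n - 1 : F[X]) b)) =
      n - (EuclideanDomain.gcd a (EuclideanDomain.gcd b (X ^ n - 1))).natDegree :=
  oneGenQC_dim_eq_general hn a b

end
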